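/- Let m, n be integers with 0 < m ≤ |n| and m ≠ n, let d = gcd(m,n) and let c ≥ 1. If G_c(m/d, n/d) has the R_∞–property, then G_c(m,n) has the R_∞–property. -/

import Mathlib

noncomputable section

def shiftN (c : ℕ) : Matrix (Fin c) (Fin c) ℤ :=
  Matrix.of fun i j => if (i : ℕ) = (j : ℕ) + 1 then 1 else 0

def Mphi (c : ℕ) (m n : ℤ) : Matrix (Fin c) (Fin c) ℤ := (n - m) • 1 + (-m) • shiftN c

def Mpsi (c : ℕ) : Matrix (Fin c) (Fin c) ℤ := 1 + shiftN c

lemma commute_Mpsi_Mphi (c : ℕ) (m n : ℤ) : Commute (Mpsi c) (Mphi c m n) := by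
  unfold Mpsi Mphi
  simp only [mul_add, add_mul, Commute, SemiconjBy]
  simp only [mul_smul_comm, smul_mul_assoc, one_mul, mul_one]
  abel

lemma det_Mpsi (c : ℕ) : (Mpsi c).det = 1 := by
  have h : (Mpsi c).BlockTriangular (OrderDual.toDual) := by
    intro i j hij
    simp only [Mpsi, shiftN, Matrix.add_apply, Matrix.one_apply, Matrix.of_apply]
    have : i < j := hij
    rw [if_neg (by omega), if_neg (by omega)]
    simp
  rw [Matrix.det_of_lowerTriangular _ h]
  apply Finset.prod_eq_one
  intro i _
  simp [Mpsi, shiftN, Matrix.one_apply]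

def MpsiUnit (c : ℕ) : (Matrix (Fin c) (Fin c) ℤ)ˣ :=
  ((Matrix.isUnit_iff_isUnit_det _).2 (by rw [det_Mpsi]; exact isUnit_one)).unit

lemma MpsiUnit_coe (c : ℕ) : (MpsiUnit c : Matrix (Fin c) (Fin c) ℤ) = Mpsi c :=
  IsUnit.unit_spec _

/-- ψ as an additive automorphism of ℤ^c. -/
def psiEquiv (c : ℕ) : (Fin c → ℤ) ≃+ (Fin c → ℤ) where
  toFun := (Mpsi c).mulVec
  invFun := ((MpsiUnit c)⁻¹ : (Matrix (Fin c) (Fin c) ℤ)ˣ).val.mulVec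
  left_inv := fun v => by
    rw [Matrix.mulVec_mulVec]
    rw [show ((MpsiUnit c)⁻¹ : (Matrix (Fin c) (Fin c) ℤ)ˣ).val * Mpsi c = 1 by
      rw [← MpsiUnit_coe]; exact Units.inv_mul _]
    exact Matrix.one_mulVec v
  right_inv := fun v => by
    rw [Matrix.mulVec_mulVec]
    rw [show Mpsi c * ((MpsiUnit c)⁻¹ : (Matrix (Fin c) (Fin c) ℤ)ˣ).val = 1 by
      rw [← MpsiUnit_coe]; exact Units.mul_inv _]
    exact Matrix.one_mulVec v
  map_add' := fun x y => Matrix.mulVec_add _ x y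

/-- The range of φ, as an additive subgroup of ℤ^c. -/
def phiRange (c : ℕ) (m n : ℤ) : AddSubgroup (Fin c → ℤ) :=
  (LinearMap.range (Mphi c m n).mulVecLin).toAddSubgroup

/-- The abelian group A_c(m,n) = ℤ^c / Im φ. -/
abbrev Ac (c : ℕ) (m n : ℤ) : Type := (Fin c → ℤ) ⧸ phiRange c m n

lemma map_phiRange (c : ℕ) (m n : ℤ) :
    (phiRange c m n).map (psiEquiv c : (Fin c → ℤ) →+ (Fin c → ℤ)) = phiRange c m n := by
  have hcomm := commute_Mpsi_Mphi c m n
  ext x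
  constructor
  · rintro ⟨y, ⟨z, rfl⟩, rfl⟩
    refine ⟨(Mpsi c).mulVec z, ?_⟩
    show (Mphi c m n).mulVec ((Mpsi c).mulVec z) = _
    show _ = (Mpsi c).mulVec ((Mphi c m n).mulVec z)
    rw [Matrix.mulVec_mulVec, Matrix.mulVec_mulVec, hcomm.eq]
  · rintro ⟨z, rfl⟩
    have hinv : Commute (((MpsiUnit c)⁻¹ : (Matrix (Fin c) (Fin c) ℤ)ˣ) : Matrix (Fin c) (Fin c) ℤ)
        (Mphi c m n) := by
      have : Commute ((MpsiUnit c : Matrix (Fin c) (Fin c) ℤ)) (Mphi c m n) := by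
        rw [MpsiUnit_coe]; exact hcomm
      exact this.units_inv_left
    refine ⟨(Mphi c m n).mulVec (((MpsiUnit c)⁻¹ :
      (Matrix (Fin c) (Fin c) ℤ)ˣ).val.mulVec z), ⟨_, rfl⟩, ?_⟩
    show (Mpsi c).mulVec _ = (Mphi c m n).mulVec z
    rw [Matrix.mulVec_mulVec, Matrix.mulVec_mulVec, hcomm.eq, mul_assoc,
      show Mpsi c * ((MpsiUnit c)⁻¹ : (Matrix (Fin c) (Fin c) ℤ)ˣ).val = 1 by
        rw [← MpsiUnit_coe]; exact Units.mul_inv _, mul_one]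


/-- The automorphism ψ induced on A_c(m,n). -/
def psiA (c : ℕ) (m n : ℤ) : Ac c m n ≃+ Ac c m n :=
  QuotientAddGroup.congr (phiRange c m n) (phiRange c m n) (psiEquiv c) (map_phiRange c m n)

/-- The action of ⟨t⟩ ≅ ℤ on A_c(m,n), with t⁻¹ a t = ψ(a). -/
def GcAct (c : ℕ) (m n : ℤ) : Multiplicative ℤ →* MulAut (Multiplicative (Ac c m n)) :=
  zpowersHom _ (AddEquiv.toMultiplicative (psiA c m n))⁻¹

/-- The group G_c(m,n) = A_c(m,n) ⋊ ⟨t⟩. -/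
abbrev Gc (c : ℕ) (m n : ℤ) : Type :=
  SemidirectProduct (Multiplicative (Ac c m n)) (Multiplicative ℤ) (GcAct c m n)

/-- The element t of G_c(m,n). -/
def tGen (c : ℕ) (m n : ℤ) : Gc c m n := SemidirectProduct.inr (Multiplicative.ofAdd 1)

/-- The image ē_i of the i-th standard basis vector in A_c(m,n). -/
def eA (c : ℕ) (m n : ℤ) (i : Fin c) : Ac c m n :=
  QuotientAddGroup.mk (Pi.single i 1)

/-- The element ē_i viewed in G_c(m,n). -/
def eG (c : ℕ) (m n : ℤ) (i : Fin c) : Gc c m n :=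
  SemidirectProduct.inl (Multiplicative.ofAdd (eA c m n i))

end

/-- The twisted conjugacy (Reidemeister) equivalence relation of an endomorphism `φ`:
`x ∼ y ↔ ∃ z, x = z * y * (φ z)⁻¹`. -/
def twistedConj {G : Type*} [Group G] (φ : G →* G) : Setoid G where
  r x y := ∃ z : G, x = z * y * (φ z)⁻¹
  iseqv := by
    constructor
    · exact fun x => ⟨1, by simp⟩
    · rintro x y ⟨z, rfl⟩
      exact ⟨z⁻¹, by simp [mul_assoc]⟩
    · rintro x y z ⟨u, rfl⟩ ⟨v, rfl⟩
      exact ⟨u * v, by simp [mul_assoc]⟩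

/-- A group `G` has the `R∞`–property if every automorphism has infinitely many
twisted conjugacy classes. -/
def HasRInfty (G : Type*) [Group G] : Prop :=
  ∀ φ : G ≃* G, Infinite (Quotient (twistedConj φ.toMonoidHom))

/-!
Write `m = d m'` and `n = d n'`. Since `φ_{m,n} = d • φ_{m',n'}`, a vector `x` lies in
`Im φ_{m',n'}` exactly when `d • x` lies in `Im φ_{m,n}`, so the projection
`A_c(m, n) → A_c(m', n')` has as kernel the `d`-torsion. As `⟨t⟩` is torsion-free, the kernel of the
induced surjection `G_c(m, n) → G_c(m', n')` is `{g | g ^ d = 1}`. Such a subgroup is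
characteristic, so every automorphism of `G_c(m, n)` descends to `G_c(m', n')`, where it already has
infinitely many twisted conjugacy classes.
-/

section Reidemeister

variable {G H : Type*} [Group G] [Group H]

theorem infinite_quotient_twistedConj_of_surjective {φ : G →* G} {φ' : H →* H} {π : G →* H}
    (hπ : Function.Surjective π) (hφ : ∀ g, φ' (π g) = π (φ g))
    [Infinite (Quotient (twistedConj φ'))] : Infinite (Quotient (twistedConj φ)) := by
  have hrel : ∀ x y, twistedConj φ x y → twistedConj φ' (π x) (π y) := by
    rintro _ y ⟨z, rfl⟩
    exact ⟨π z, by rw [hφ, map_mul, map_mul, map_inv]⟩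
  exact Infinite.of_surjective (Quotient.map π hrel) (Quotient.map_surjective hrel hπ)

theorem exists_mulEquiv_apply_eq_of_ker_characteristic {π : G →* H}
    (hπ : Function.Surjective π) (hker : π.ker.Characteristic) (φ : G ≃* G) :
    ∃ φ' : H ≃* H, ∀ g, φ' (π g) = π (φ g) := by
  let e : G ⧸ π.ker ≃* H := QuotientGroup.liftEquiv π.ker hπ rfl
  let φq : G ⧸ π.ker ≃* G ⧸ π.ker :=
    QuotientGroup.congr π.ker π.ker φ (Subgroup.characteristic_iff_map_eq.1 hker φ)
  refine ⟨e.symm.trans (φq.trans e), fun g => ?_⟩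
  have hg : e.symm (π g) = (g : G ⧸ π.ker) := e.symm_apply_apply (g : G ⧸ π.ker)
  rw [MulEquiv.trans_apply, hg]
  rfl

theorem HasRInfty.of_surjective {π : G →* H} (hπ : Function.Surjective π)
    (hker : π.ker.Characteristic) (hH : HasRInfty H) : HasRInfty G := by
  intro φ
  obtain ⟨φ', hφ'⟩ := exists_mulEquiv_apply_eq_of_ker_characteristic hπ hker φ
  have := hH φ'
  exact infinite_quotient_twistedConj_of_surjective (φ' := φ'.toMonoidHom) hπ hφ'

theorem characteristic_of_mem_iff_zpow_eq_one {K : Subgroup G} {d : ℤ}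
    (hK : ∀ g, g ∈ K ↔ g ^ d = 1) : K.Characteristic := by
  refine Subgroup.characteristic_iff_le_comap.2 fun φ g hg => ?_
  rw [Subgroup.mem_comap, hK, ← map_zpow, (hK g).1 hg, map_one]

end Reidemeister

section SemidirectProduct

theorem map_zpow_smul_of_map_smul {G H X Y : Type*} [Group G] [Group H] [MulAction G X]
    [MulAction H Y] {f : X → Y} {g : G} {h : H} (hf : ∀ x, f (g • x) = h • f x) (k : ℤ) (x : X) :
    f (g ^ k • x) = h ^ k • f x := by
  have hinv (x : X) : f (g⁻¹ • x) = h⁻¹ • f x := by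
    rw [eq_inv_smul_iff, ← hf, smul_inv_smul]
  induction k generalizing x with
  | zero => rw [zpow_zero, zpow_zero, one_smul, one_smul]
  | succ k ih => rw [zpow_add_one, zpow_add_one, mul_smul, mul_smul, ih, hf]
  | pred k ih => rw [zpow_sub_one, zpow_sub_one, mul_smul, mul_smul, ih, hinv]

theorem semidirectProduct_map_id_eq_one_iff {N₁ N₂ K : Type*} [Group N₁] [Group N₂] [Group K]
    [IsMulTorsionFree K] {α₁ : K →* MulAut N₁} {α₂ : K →* MulAut N₂} {f : N₁ →* N₂}
    (hf : ∀ k, f.comp (α₁ k).toMonoidHom = (α₂ k).toMonoidHom.comp f) {d : ℤ} (hd : d ≠ 0)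
    (hker : ∀ a, f a = 1 ↔ a ^ d = 1) (g : N₁ ⋊[α₁] K) :
    SemidirectProduct.map f (MonoidHom.id K) hf g = 1 ↔ g ^ d = 1 := by
  have hright_of_map (h : SemidirectProduct.map f (MonoidHom.id K) hf g = 1) : g.right = 1 :=
    congrArg SemidirectProduct.right h
  have hright_of_zpow (h : g ^ d = 1) : g.right = 1 := by
    rw [← IsMulTorsionFree.zpow_eq_one_iff_left hd, ← SemidirectProduct.rightHom_eq_right,
      ← map_zpow, h, map_one]
  suffices g.right = 1 → (SemidirectProduct.map f (MonoidHom.id K) hf g = 1 ↔ g ^ d = 1) from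
    ⟨fun h => (this (hright_of_map h)).1 h, fun h => (this (hright_of_zpow h)).2 h⟩
  intro hg
  have hinl : g = SemidirectProduct.inl g.left := SemidirectProduct.ext rfl hg
  rw [hinl, SemidirectProduct.map_inl, ← map_zpow,
    map_eq_one_iff _ SemidirectProduct.inl_injective,
    map_eq_one_iff _ SemidirectProduct.inl_injective, hker]

end SemidirectProduct

section Projection

variable (c : ℕ) (d m n : ℤ)

theorem Mphi_mul : Mphi c (d * m) (d * n) = d • Mphi c m n := by
  simp only [Mphi, smul_add, smul_smul, mul_sub, mul_neg]

theorem phiRange_mul :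
    phiRange c (d * m) (d * n) = (phiRange c m n).map (zsmulAddGroupHom d) := by
  have hcomp : (Mphi c (d * m) (d * n)).mulVecLin =
      (LinearMap.lsmul ℤ _ d).comp (Mphi c m n).mulVecLin := by
    rw [Mphi_mul]
    exact LinearMap.ext fun x => Matrix.smul_mulVec d (Mphi c m n) x
  rw [phiRange, hcomp, LinearMap.range_comp]
  rfl

theorem phiRange_mul_le : phiRange c (d * m) (d * n) ≤ phiRange c m n := by
  rw [phiRange_mul]
  rintro _ ⟨x, hx, rfl⟩
  exact zsmul_mem hx d

variable {d} in
theorem zsmul_mem_phiRange_mul_iff (hd : d ≠ 0) (x : Fin c → ℤ) :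
    d • x ∈ phiRange c (d * m) (d * n) ↔ x ∈ phiRange c m n := by
  rw [phiRange_mul]
  have hinj : Function.Injective (zsmulAddGroupHom d : (Fin c → ℤ) →+ _) := zsmul_right_injective hd
  exact AddSubgroup.mem_map_iff_mem hinj

/-- The projection `A_c(dm, dn) → A_c(m, n)` of quotients of `ℤ^c`, through which the two groups
`G_c` are compared. -/
def projA : Ac c (d * m) (d * n) →+ Ac c m n :=
  QuotientAddGroup.map _ _ (AddMonoidHom.id _) (phiRange_mul_le c d m n)

theorem projA_surjective : Function.Surjective (projA c d m n) :=
  QuotientAddGroup.map_surjective_of_surjective _ _ _ QuotientAddGroup.mk_surjective _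

theorem projA_psiA (a : Ac c (d * m) (d * n)) :
    projA c d m n (psiA c (d * m) (d * n) a) = psiA c m n (projA c d m n a) := by
  induction a using QuotientAddGroup.induction_on
  rfl

variable {d} in
theorem projA_eq_zero_iff (hd : d ≠ 0) (a : Ac c (d * m) (d * n)) :
    projA c d m n a = 0 ↔ d • a = 0 := by
  induction a using QuotientAddGroup.induction_on with
  | H x =>
    rw [← QuotientAddGroup.mk_zsmul, QuotientAddGroup.eq_zero_iff,
      zsmul_mem_phiRange_mul_iff c m n hd]
    exact QuotientAddGroup.eq_zero_iff x

theorem GcAct_apply (k : Multiplicative ℤ) :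
    GcAct c m n k = (AddEquiv.toMultiplicative (psiA c m n) : MulAut _) ^ (-k.toAdd) := by
  rw [GcAct, zpowersHom_apply, inv_zpow']

theorem projA_comp_GcAct (k : Multiplicative ℤ) :
    (projA c d m n).toMultiplicative.comp (GcAct c (d * m) (d * n) k).toMonoidHom =
      (GcAct c m n k).toMonoidHom.comp (projA c d m n).toMultiplicative := by
  rw [GcAct_apply, GcAct_apply]
  exact MonoidHom.ext <| map_zpow_smul_of_map_smul
    (g := (AddEquiv.toMultiplicative (psiA c (d * m) (d * n)) : MulAut _))
    (h := (AddEquiv.toMultiplicative (psiA c m n) : MulAut _)) (projA_psiA c d m n) _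

/-- The projection `G_c(dm, dn) → G_c(m, n)` which is `projA` on `A_c(dm, dn)` and sends `t` to `t`;
the `R∞`–property is lifted along it. -/
noncomputable def projG : Gc c (d * m) (d * n) →* Gc c m n :=
  SemidirectProduct.map (projA c d m n).toMultiplicative (MonoidHom.id _)
    (projA_comp_GcAct c d m n)

theorem projG_surjective : Function.Surjective (projG c d m n) := by
  rintro ⟨b, k⟩
  obtain ⟨a, rfl⟩ := projA_surjective c d m n b.toAdd
  exact ⟨⟨Multiplicative.ofAdd a, k⟩, rfl⟩

variable {d} in
theorem projG_eq_one_iff (hd : d ≠ 0) (g : Gc c (d * m) (d * n)) :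
    projG c d m n g = 1 ↔ g ^ d = 1 :=
  semidirectProduct_map_id_eq_one_iff (projA_comp_GcAct c d m n) hd
    (projA_eq_zero_iff c m n hd) g

end Projection

theorem stmt18_general {m n d : ℤ} (hd : d ≠ 0) (hdm : d ∣ m) (hdn : d ∣ n) (c : ℕ)
    (h : HasRInfty (Gc c (m / d) (n / d))) : HasRInfty (Gc c m n) := by
  obtain ⟨m, rfl⟩ := hdm
  obtain ⟨n, rfl⟩ := hdn
  rw [Int.mul_ediv_cancel_left m hd, Int.mul_ediv_cancel_left n hd] at h
  exact h.of_surjective (projG_surjective c d m n)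
    (characteristic_of_mem_iff_zpow_eq_one (projG_eq_one_iff c m n hd))

/-- For `0 < m ≤ |n|`, `m ≠ n`, `d = gcd(m,n)` and `c ≥ 1`: if `G_c(m/d, n/d)` has the
`R∞`–property, then so does `G_c(m,n)`. -/
theorem stmt18 (m n : ℤ) (hm : 0 < m) (hmabs : m ≤ |n|) (hmn : m ≠ n) (c : ℕ)
    (hc : 1 ≤ c)
    (h : HasRInfty (Gc c (m / (Int.gcd m n : ℤ)) (n / (Int.gcd m n : ℤ)))) :
    HasRInfty (Gc c m n) :=
  stmt18_general (by exact_mod_cast (Int.gcd_pos_of_ne_zero_left n hm.ne').ne')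
    (Int.gcd_dvd_left m n) (Int.gcd_dvd_right m n) c h
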